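/- Let p, q ∈ R be idempotents. Then (1-p)*q is group invertible if and only if q4 is group invertible and q4^π * q3 = 0. -/

import Mathlib

/-!
Write `e = 1 - p` and `a = e * q`, so that `e * a = a`, `q4 = a * e` and `q3 = a * p`. Relative to
`e` the element `a` is block triangular with diagonal block `q4` and off-diagonal block `q3`.

If `c = a^#`, then `e * c = c` and `c * e` is the group inverse of `a * e`; hence
`q4^π * q3 = (1 - a * c * e) * a * p = (a - a * c * a) * p = 0`.

Conversely, if `d = q4^#` and `q4^π * q3 = 0`, then `q4^π * a = q4^π * (q3 + q4) = 0`, i.e.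
`q4 * d * a = a`, and this makes `d * d * a` a group inverse of `a`.
-/

variable {R : Type*} [Ring R]

/-- `c` is a group inverse of `a`. -/
def IsGroupInvOf (a c : R) : Prop := a * c * a = a ∧ c * a * c = c ∧ a * c = c * a

/-- `a` is group invertible. -/
def GroupInvertible (a : R) : Prop := ∃ c, IsGroupInvOf a c

/-- The group inverse `a^#` (junk value `0` if it does not exist). -/
noncomputable def gi (a : R) : R :=
  haveI := Classical.dec (GroupInvertible a)
  if h : GroupInvertible a then h.choose else 0

/-- The spectral idempotent `a^π = 1 - a * a^#`. -/
noncomputable def sp (a : R) : R := 1 - a * gi a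

theorem IsGroupInvOf.unique {a c d : R}
    (hc : IsGroupInvOf a c) (hd : IsGroupInvOf a d) : c = d := by
  obtain ⟨c1, c2, c3⟩ := hc
  obtain ⟨d1, d2, d3⟩ := hd
  have key : c * a = a * d := by
    calc c * a = c * (a * d * a) := by rw [d1]
      _ = (c * a) * (d * a) := by noncomm_ring
      _ = (a * c) * (a * d) := by rw [c3, d3]
      _ = (a * c * a) * d := by noncomm_ring
      _ = a * d := by rw [c1]
  calc c = c * a * c := c2.symm
    _ = d * (a * c) := by rw [key, d3, mul_assoc]
    _ = d * a * d := by rw [c3, key, mul_assoc]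
    _ = d := d2

theorem GroupInvertible.isGroupInvOf_gi {a : R} (h : GroupInvertible a) :
    IsGroupInvOf a (gi a) := by
  unfold gi
  rw [dif_pos h]
  exact h.choose_spec

theorem IsGroupInvOf.gi_eq {a c : R} (h : IsGroupInvOf a c) : gi a = c :=
  IsGroupInvOf.unique (GroupInvertible.isGroupInvOf_gi ⟨c, h⟩) h

/-- A left identity for `a` is a left identity for its group inverse, since `c = a * c * c`. -/
theorem IsGroupInvOf.left_absorb {a c e : R} (h : IsGroupInvOf a c)
    (he : e * a = a) : e * c = c := by
  obtain ⟨-, h2, h3⟩ := h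
  rw [← h2, ← h3, ← mul_assoc, ← mul_assoc, he]

/-- Compression of a group inverse to the diagonal block of a block triangular element. -/
theorem IsGroupInvOf.mul_right {a c e : R} (h : IsGroupInvOf a c)
    (he : e * a = a) : IsGroupInvOf (a * e) (c * e) := by
  have hec := h.left_absorb he
  obtain ⟨h1, h2, h3⟩ := h
  have hl : a * e * (c * e) = a * c * e := by
    rw [mul_assoc a, ← mul_assoc e, hec, mul_assoc]
  have hr : c * e * (a * e) = c * a * e := by
    rw [mul_assoc c, ← mul_assoc e, he, mul_assoc]
  refine ⟨?_, ?_, ?_⟩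
  · rw [hl, mul_assoc, ← mul_assoc e, he, ← mul_assoc, h1]
  · rw [hr, mul_assoc, ← mul_assoc e, hec, ← mul_assoc, h2]
  · rw [hl, hr, h3]

/-- Group inverse of a block triangular element from that of its diagonal block `a * e`. -/
theorem IsGroupInvOf.of_mul_right {a d e : R} (hee : e * a = a)
    (h : IsGroupInvOf (a * e) d) (hd : a * e * d * a = a) : IsGroupInvOf a (d * d * a) := by
  have hed : e * d = d := h.left_absorb (by rw [← mul_assoc, hee])
  obtain ⟨-, h2, h3⟩ := h
  have had : a * e * d = a * d := by rw [mul_assoc, hed]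
  have haa : a * e * a = a * a := by rw [mul_assoc, hee]
  have hadd : a * d * d = d := by rw [← had, h3, h2]
  have hdaa : d * a * a = a := by
    rw [mul_assoc, ← haa, ← mul_assoc, ← h3, hd]
  have hac : a * (d * d * a) = d * a := by
    rw [← mul_assoc, ← mul_assoc, hadd]
  have hca : d * d * a * a = d * a := by
    rw [mul_assoc d d, mul_assoc d, hdaa]
  refine ⟨?_, ?_, ?_⟩
  · rw [hac, hdaa]
  · rw [hca, mul_assoc, hac, mul_assoc]
  · rw [hac, hca]

theorem group_inv_pbar_q (p q q1 q2 q3 q4 : R) (hp : p * p = p) (hq : q * q = q)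
    (h1 : q1 = p * q * p) (h2 : q2 = p * q * (1 - p))
    (h3 : q3 = (1 - p) * q * p) (h4 : q4 = (1 - p) * q * (1 - p)) :
    GroupInvertible ((1 - p) * q) ↔ GroupInvertible q4 ∧ sp q4 * q3 = 0 := by
  have he : (1 - p) * (1 - p) = 1 - p := by
    rw [mul_sub, sub_mul, sub_mul, hp]; simp
  have hea : (1 - p) * ((1 - p) * q) = (1 - p) * q := by rw [← mul_assoc, he]
  subst h3 h4
  generalize (1 - p) * q = a at hea ⊢
  constructor
  · rintro ⟨c, hc⟩
    have hb := hc.mul_right hea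
    have hec := hc.left_absorb hea
    refine ⟨⟨_, hb⟩, ?_⟩
    have hz : a * (1 - p) * (c * (1 - p)) * a = a := by
      rw [mul_assoc, mul_assoc c, hea, mul_assoc a, ← mul_assoc (1 - p), hec, ← mul_assoc, hc.1]
    rw [sp, hb.gi_eq, ← mul_assoc, sub_mul, one_mul, hz, sub_self, zero_mul]
  · rintro ⟨hg, hs⟩
    have hd := hg.isGroupInvOf_gi
    refine ⟨_, hd.of_mul_right hea ?_⟩
    -- The spectral idempotent of `q4` kills both `q4` and `q3`, hence their sum `a`.
    have h0 : sp (a * (1 - p)) * (a * (1 - p)) = 0 := by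
      rw [sp, sub_mul, one_mul, hd.1, sub_self]
    have hsum : sp (a * (1 - p)) * a = 0 := by
      calc sp (a * (1 - p)) * a
          = sp (a * (1 - p)) * (a * p + a * (1 - p)) := by rw [← mul_add]; simp
        _ = 0 := by rw [mul_add, hs, h0, add_zero]
    rw [sp, sub_mul, one_mul, sub_eq_zero] at hsum
    exact hsum.symm
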